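/- Let H be a Hopf monoid in a braided monoidal category C (not assumed symmetric), and let (δ, σ) be a braided modular pair in involution for H. Then τ₂ ∘ Δ = ((η ⊗ 1_H) ∘ λ_H⁻¹) ∘ τ₁ as morphisms H → H ⊗ H, where τ₁ := m ∘ (S̃ ⊗ σ) ∘ ρ_H⁻¹ : H → H (i.e. the para-cocyclic relation τ₂ ∘ δ₁ = δ₀ ∘ τ₁ with coface maps δ₁ := Δ and δ₀ := (η ⊗ 1_H) ∘ λ_H⁻¹). -/

import Mathlib

open CategoryTheory MonoidalCategory

universe v u

/-- A Hopf algebra object (a "braided Hopf algebra") in a braided monoidal category `C`,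
consisting of an object `X` with multiplication `mul`, unit `one`, comultiplication
`comul`, counit `counit` and antipode `antipode`, satisfying the usual axioms, with
the compatibility of `mul` and `comul` expressed via the braiding. -/
structure HopfObj (C : Type u) [Category.{v} C] [MonoidalCategory C]
    [BraidedCategory C] where
  X : C
  mul : X ⊗ X ⟶ X
  one : 𝟙_ C ⟶ X
  comul : X ⟶ X ⊗ X
  counit : X ⟶ 𝟙_ C
  antipode : X ⟶ X
  mul_assoc : (mul ▷ X) ≫ mul = (α_ X X X).hom ≫ (X ◁ mul) ≫ mul
  one_mul : (one ▷ X) ≫ mul = (λ_ X).hom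
  mul_one : (X ◁ one) ≫ mul = (ρ_ X).hom
  comul_assoc : comul ≫ (comul ▷ X) ≫ (α_ X X X).hom = comul ≫ (X ◁ comul)
  counit_comul : comul ≫ (counit ▷ X) = (λ_ X).inv
  comul_counit : comul ≫ (X ◁ counit) = (ρ_ X).inv
  mul_comul : mul ≫ comul =
      (comul ⊗ₘ comul) ≫ (α_ X X (X ⊗ X)).hom ≫ (X ◁ (α_ X X X).inv) ≫
        (X ◁ ((β_ X X).hom ▷ X)) ≫ (X ◁ (α_ X X X).hom) ≫
        (α_ X X (X ⊗ X)).inv ≫ (mul ⊗ₘ mul)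
  one_comul : one ≫ comul = (λ_ (𝟙_ C)).inv ≫ (one ⊗ₘ one)
  mul_counit : mul ≫ counit = (counit ⊗ₘ counit) ≫ (λ_ (𝟙_ C)).hom
  one_counit : one ≫ counit = 𝟙 (𝟙_ C)
  antipode_left : comul ≫ (antipode ▷ X) ≫ mul = counit ≫ one
  antipode_right : comul ≫ (X ◁ antipode) ≫ mul = counit ≫ one

variable {C : Type u} [Category.{v} C] [MonoidalCategory C] [BraidedCategory C]

/-- The `δ`-twisted antipode `S̃ = λ_H ∘ (δ ⊗ S) ∘ Δ`. -/
def HopfObj.twist (A : _root_.HopfObj C) (δ : A.X ⟶ 𝟙_ C) : A.X ⟶ A.X :=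
  A.comul ≫ (δ ⊗ₘ A.antipode) ≫ (λ_ A.X).hom

/-- `δ : H ⟶ 𝟙` is a character, i.e. a morphism of monoid objects. -/
def HopfObj.IsCharacter (A : _root_.HopfObj C) (δ : A.X ⟶ 𝟙_ C) : Prop :=
  A.mul ≫ δ = (δ ⊗ₘ δ) ≫ (λ_ (𝟙_ C)).hom ∧ A.one ≫ δ = 𝟙 (𝟙_ C)

/-- `σ : 𝟙 ⟶ H` is a cocharacter, i.e. a morphism of comonoid objects. -/
def HopfObj.IsCocharacter (A : _root_.HopfObj C) (σ : 𝟙_ C ⟶ A.X) : Prop :=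
  σ ≫ A.comul = (λ_ (𝟙_ C)).inv ≫ (σ ⊗ₘ σ) ∧ σ ≫ A.counit = 𝟙 (𝟙_ C)

/-- The morphism `m ∘ (m ⊗ 1_H) ∘ ((S ∘ σ) ⊗ (S̃ ∘ S̃) ⊗ σ) : H ⟶ H`
(with unitors inserted). -/
def HopfObj.bmpiMap (A : _root_.HopfObj C) (δ : A.X ⟶ 𝟙_ C) (σ : 𝟙_ C ⟶ A.X) :
    A.X ⟶ A.X :=
  (λ_ A.X).inv ≫ ((σ ≫ A.antipode) ⊗ₘ (A.twist δ ≫ A.twist δ)) ≫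
    (ρ_ (A.X ⊗ A.X)).inv ≫ ((A.X ⊗ A.X) ◁ σ) ≫ (A.mul ▷ A.X) ≫ A.mul

/-- `(δ, σ)` is a braided modular pair in involution. -/
def HopfObj.IsBMPI (A : _root_.HopfObj C) (δ : A.X ⟶ 𝟙_ C) (σ : 𝟙_ C ⟶ A.X) : Prop :=
  σ ≫ δ = 𝟙 (𝟙_ C) ∧ A.bmpiMap δ σ = 𝟙 A.X

/-- The cyclic operator `τ₂ = (m ⊗ m) ∘ (1_H ⊗ ψ ⊗ 1_H) ∘ ((Δ ∘ S̃) ⊗ 1_H ⊗ σ)`,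
with the `σ`-factor inserted via `H ⊗ H ≅ (H ⊗ H) ⊗ 𝟙`. -/
def HopfObj.tau2 (A : _root_.HopfObj C) (δ : A.X ⟶ 𝟙_ C) (σ : 𝟙_ C ⟶ A.X) :
    A.X ⊗ A.X ⟶ A.X ⊗ A.X :=
  (ρ_ (A.X ⊗ A.X)).inv ≫ (((A.twist δ ≫ A.comul) ⊗ₘ 𝟙 A.X) ⊗ₘ σ) ≫
    (((α_ A.X A.X A.X).hom ≫ (A.X ◁ (β_ A.X A.X).hom) ≫ (α_ A.X A.X A.X).inv) ▷ A.X) ≫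
    (α_ (A.X ⊗ A.X) A.X A.X).hom ≫ (A.mul ⊗ₘ A.mul)

/-- The Mathlib Hopf object structure attached to `A`. -/
@[reducible] def HopfObj.toMathlib (A : _root_.HopfObj C) : CategoryTheory.HopfObj A.X where
  one := A.one
  mul := A.mul
  one_mul := A.one_mul
  mul_one := A.mul_one
  mul_assoc := A.mul_assoc
  counit := A.counit
  comul := A.comul
  counit_comul := A.counit_comul
  comul_counit := A.comul_counit
  comul_assoc := A.comul_assoc.symm
  mul_comul := by
    have := A.mul_comul
    simpa [tensorμ] using this
  one_comul := A.one_comul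
  mul_counit := A.mul_counit
  one_counit := A.one_counit
  antipode := A.antipode
  antipode_left := A.antipode_left
  antipode_right := A.antipode_right

theorem HopfObj.antipode_comul_aux (A : _root_.HopfObj C) :
    A.antipode ≫ A.comul = A.comul ≫ (β_ A.X A.X).hom ≫ (A.antipode ⊗ₘ A.antipode) := by
  let _ := A.toMathlib
  exact CategoryTheory.HopfObj.antipode_comul A.X

theorem HopfObj.comul_assoc_aux (A : _root_.HopfObj C) :
    A.comul ≫ (A.comul ▷ A.X) = A.comul ≫ (A.X ◁ A.comul) ≫ (α_ A.X A.X A.X).inv := by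
  rw [← reassoc_of% A.comul_assoc]; simp

theorem HopfObj.twist_eq (A : _root_.HopfObj C) (δ : A.X ⟶ 𝟙_ C) :
    A.twist δ = A.comul ≫ δ ▷ A.X ≫ (λ_ A.X).hom ≫ A.antipode := by
  simp [HopfObj.twist, MonoidalCategory.tensorHom_def]

theorem HopfObj.twist_comul (A : _root_.HopfObj C) (δ : A.X ⟶ 𝟙_ C) :
    A.twist δ ≫ A.comul =
      A.comul ≫ (A.twist δ ▷ A.X) ≫ (A.X ◁ A.antipode) ≫ (β_ A.X A.X).hom := by
  have e : A.comul ≫ (A.twist δ ▷ A.X) =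
      A.comul ≫ δ ▷ A.X ≫ (λ_ A.X).hom ≫ A.comul ≫ A.antipode ▷ A.X := by
    rw [twist_eq, comp_whiskerRight, reassoc_of% A.comul_assoc_aux]
    simp only [comp_whiskerRight, ← associator_inv_naturality_left_assoc,
      whisker_exchange_assoc]
    simp
  rw [reassoc_of% e, twist_eq]
  simp only [Category.assoc, A.antipode_comul_aux]
  rw [← tensorHom_def_assoc, BraidedCategory.braiding_naturality]

theorem HopfObj.key_aux (A : _root_.HopfObj C) (δ : A.X ⟶ 𝟙_ C) :
    A.comul ≫ (A.twist δ ≫ A.comul) ▷ A.X ≫ (α_ A.X A.X A.X).hom ≫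
      (A.X ◁ (β_ A.X A.X).hom) ≫ (α_ A.X A.X A.X).inv ≫ A.mul ▷ A.X =
    A.twist δ ≫ (λ_ A.X).inv ≫ A.one ▷ A.X := by
  have hex := BraidedCategory.hexagon_forward A.X A.X A.X
  have hex' : (β_ A.X A.X).hom ▷ A.X ≫ (α_ A.X A.X A.X).hom ≫
      (A.X ◁ (β_ A.X A.X).hom) ≫ (α_ A.X A.X A.X).inv =
      (α_ A.X A.X A.X).hom ≫ (β_ A.X (A.X ⊗ A.X)).hom := by
    rw [← reassoc_of% hex]; simp
  rw [twist_comul]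
  simp only [comp_whiskerRight, Category.assoc]
  rw [reassoc_of% hex', reassoc_of% A.comul_assoc_aux,
    ← BraidedCategory.braiding_naturality_right]
  have h1 : (α_ A.X A.X A.X).inv ≫ A.twist δ ▷ A.X ▷ A.X ≫ (A.X ◁ A.antipode) ▷ A.X ≫
      (α_ A.X A.X A.X).hom = A.twist δ ▷ (A.X ⊗ A.X) ≫ A.X ◁ (A.antipode ▷ A.X) := by
    simp
  rw [reassoc_of% h1, ← whisker_exchange_assoc]
  have h2 : A.X ◁ A.comul ≫ A.X ◁ A.antipode ▷ A.X ≫ A.X ◁ A.mul =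
      A.X ◁ A.counit ≫ A.X ◁ A.one := by
    simp only [← whiskerLeft_comp, A.antipode_left]
  rw [← whisker_exchange_assoc, reassoc_of% h2, reassoc_of% A.comul_counit,
    whisker_exchange_assoc, BraidedCategory.braiding_naturality_right]
  simp

theorem HopfObj.tau2_comul (A : _root_.HopfObj C) (δ : A.X ⟶ 𝟙_ C) (σ : 𝟙_ C ⟶ A.X)
    (hδ : A.IsCharacter δ) (hσ : A.IsCocharacter σ) (hbmpi : A.IsBMPI δ σ) :
    A.comul ≫ A.tau2 δ σ =
      ((ρ_ A.X).inv ≫ (A.twist δ ⊗ₘ σ) ≫ A.mul) ≫ (λ_ A.X).inv ≫ (A.one ▷ A.X) := by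
  have key := congrArg (fun f => (ρ_ A.X).inv ≫ (f ▷ 𝟙_ C) ≫ ((A.X ⊗ A.X) ◁ σ) ≫
    (α_ A.X A.X A.X).hom ≫ A.X ◁ A.mul) (A.key_aux δ)
  refine Eq.trans (Eq.trans ?_ key) ?_
  · simp only [HopfObj.tau2, MonoidalCategory.tensorHom_def, Category.assoc, comp_whiskerRight,
      whiskerLeft_id, id_whiskerRight, Category.id_comp]
    rw [← associator_naturality_left_assoc]
    simp only [whisker_exchange_assoc]
    simp only [rightUnitor_inv_naturality_assoc]
  · rw [MonoidalCategory.tensorHom_def]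
    simp only [Category.assoc, comp_whiskerRight, leftUnitor_inv_naturality_assoc,
      rightUnitor_inv_naturality_assoc, leftUnitor_inv_naturality, whisker_exchange]
    simp
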